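/- Let R be a basic left Harada algebra with modules P_{ij} := rad^{j-1}(e_{i1}R) as below, and let f : P_{ij} → P_{kl} be a homomorphism of right R-modules (1 ≤ i,k ≤ m, 1 ≤ j ≤ n_i, 1 ≤ l ≤ n_k). Then f is injective if and only if i = k, j ≥ l, and the image of f equals P_{kj} (as submodules of e_{k1}R). -/

import Mathlib

/-!
Common setup.  `K` is an algebraically closed field and `R` a finite-dimensional associative
unital `K`-algebra.  Right `R`-modules are formalized as modules over the opposite ring `Rᵐᵒᵖ`
(so that `MulOpposite.op r • x = x * r`).
-/

open MulOpposite

/-- The right ideal `xR` of a ring `R`, as a submodule of `R` over `Rᵐᵒᵖ`. -/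
def rightIdeal (R : Type) [Ring R] (x : R) : Submodule Rᵐᵒᵖ R :=
  Submodule.span Rᵐᵒᵖ {x}

/-- The Jacobson radical of a submodule `N` (the intersection of the maximal submodules of the
module `N`), viewed as a submodule of the ambient module.  Iterating this operation gives the
iterated radicals `rad^k`. -/
def radSub {A M : Type} [Ring A] [AddCommGroup M] [Module A M] (N : Submodule A M) :
    Submodule A M :=
  Submodule.map N.subtype (sInf {P : Submodule A ↥N | IsCoatom P})

/-- A module is indecomposable if it is nonzero and admits no nontrivial direct sum
decomposition. -/
def IsIndecomposableMod (A M : Type) [Ring A] [AddCommGroup M] [Module A M] : Prop :=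
  Nontrivial M ∧ ∀ N N' : Submodule A M, IsCompl N N' → N = ⊥ ∨ N' = ⊥

/-- A module has projective dimension at most one iff it admits a surjection from a projective
module with projective kernel. -/
def PdLeOne (A : Type) [Ring A] (M : Type) [AddCommGroup M] [Module A M] : Prop :=
  ∃ (P : ModuleCat.{0} A) (f : ↥P →ₗ[A] M),
    Module.Projective A ↥P ∧ Function.Surjective f ∧
      Module.Projective A ↥(LinearMap.ker f)

/-- `Ext¹_A(M,N) = 0`, expressed by the splitting of every short exact sequence
`0 → N → E → M → 0`. -/
def Ext1Zero (A : Type) [Ring A] (M N : Type) [AddCommGroup M] [Module A M]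
    [AddCommGroup N] [Module A N] : Prop :=
  ∀ (E : ModuleCat.{0} A) (i : N →ₗ[A] ↥E) (p : ↥E →ₗ[A] M),
    Function.Injective i → Function.Surjective p → LinearMap.range i = LinearMap.ker p →
    ∃ s : M →ₗ[A] ↥E, p.comp s = LinearMap.id

/-- `X ∈ add T` : `X` is a direct summand of a finite direct sum of copies of `T`. -/
def InAdd (A : Type) [Ring A] (T X : Type) [AddCommGroup T] [Module A T]
    [AddCommGroup X] [Module A X] : Prop :=
  ∃ (k : ℕ) (f : X →ₗ[A] (Fin k → T)) (g : (Fin k → T) →ₗ[A] X),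
    g.comp f = LinearMap.id

/-- `T` is a (finitely generated) tilting right `R`-module: projective dimension at most one,
no self-extensions, and there is a short exact sequence `0 → R → T₀ → T₁ → 0` with
`T₀, T₁ ∈ add T`. -/
def IsTiltingRight (R : Type) [Ring R] (T : Type) [AddCommGroup T] [Module Rᵐᵒᵖ T] : Prop :=
  Module.Finite Rᵐᵒᵖ T ∧ PdLeOne Rᵐᵒᵖ T ∧ Ext1Zero Rᵐᵒᵖ T T ∧
    ∃ (T₀ T₁ : ModuleCat.{0} Rᵐᵒᵖ) (f : R →ₗ[Rᵐᵒᵖ] ↥T₀) (g : ↥T₀ →ₗ[Rᵐᵒᵖ] ↥T₁),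
      InAdd Rᵐᵒᵖ T ↥T₀ ∧ InAdd Rᵐᵒᵖ T ↥T₁ ∧
        Function.Injective f ∧ Function.Surjective g ∧ LinearMap.range f = LinearMap.ker g

/-- `T` is basic: it is an (internal) direct sum of pairwise non-isomorphic indecomposable
submodules. -/
def IsBasicMod (A : Type) [Ring A] (T : Type) [AddCommGroup T] [Module A T] : Prop :=
  ∃ (k : ℕ) (N : Fin k → Submodule A T),
    DirectSum.IsInternal N ∧ (∀ a, IsIndecomposableMod A ↥(N a)) ∧
      ∀ a b, a ≠ b → IsEmpty (↥(N a) ≃ₗ[A] ↥(N b))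

/-- The setoid identifying isomorphic modules (among those with property `P`). -/
def isoSetoid (A : Type) [Ring A] (P : ModuleCat.{0} A → Prop) :
    Setoid {M : ModuleCat.{0} A // P M} where
  r M N := Nonempty (↥M.1 ≃ₗ[A] ↥N.1)
  iseqv := ⟨fun M => ⟨LinearEquiv.refl A ↥M.1⟩, fun ⟨e⟩ => ⟨e.symm⟩,
    fun ⟨e⟩ ⟨f⟩ => ⟨e.trans f⟩⟩

/-- The data exhibiting a ring `R` as a basic left Harada algebra:
a complete set `{e i j}` of orthogonal primitive idempotents with pairwise non-isomorphic
right ideals `(e i j)R` (`R` is basic), such that each `(e i 0)R` is an injective right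
module, and `(e i j)R ≅ rad ((e i (j-1))R)` for `j ≥ 1`.  (Indices are shifted by one from
the paper: the paper's `e_{ij}` is `e i (j-1)` here.) -/
structure HaradaData (R : Type) [Ring R] : Type where
  m : ℕ
  hm : 0 < m
  n : Fin m → ℕ
  hn : ∀ i, 0 < n i
  e : (i : Fin m) → Fin (n i) → R
  idem : ∀ i j, IsIdempotentElem (e i j)
  orth : ∀ p q : Σ i : Fin m, Fin (n i), p ≠ q → e p.1 p.2 * e q.1 q.2 = 0
  sum_eq_one : ∑ p : Σ i : Fin m, Fin (n i), e p.1 p.2 = 1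
  indec : ∀ i j, IsIndecomposableMod Rᵐᵒᵖ ↥(rightIdeal R (e i j))
  basic : ∀ p q : Σ i : Fin m, Fin (n i), p ≠ q →
    IsEmpty (↥(rightIdeal R (e p.1 p.2)) ≃ₗ[Rᵐᵒᵖ] ↥(rightIdeal R (e q.1 q.2)))
  inj : ∀ i, Module.Injective Rᵐᵒᵖ ↥(rightIdeal R (e i ⟨0, hn i⟩))
  rad_iso : ∀ (i : Fin m) (j : Fin (n i)), 0 < j.val →
    Nonempty (↥(rightIdeal R (e i j)) ≃ₗ[Rᵐᵒᵖ]
      ↥(radSub (rightIdeal R (e i ⟨j.val - 1, Nat.lt_of_le_of_lt (Nat.sub_le j.val 1) j.isLt⟩))))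

variable {R : Type} [Ring R]

/-- `H.P i j = rad^j ((e i 0)R)`; this is the paper's `P_{i,j+1} = rad^j (e_{i1}R)`,
a submodule of `R`. -/
def HaradaData.P (H : HaradaData R) (i : Fin H.m) (j : Fin (H.n i)) : Submodule Rᵐᵒᵖ R :=
  radSub^[j.val] (rightIdeal R (H.e i ⟨0, H.hn i⟩))

/-- The quotient module `P_{ik}/P_{il}` (for `l ≥ k` we have `H.P i l ≤ H.P i k`). -/
abbrev HaradaData.Quot (H : HaradaData R) (i : Fin H.m) (k l : Fin (H.n i)) : Type :=
  ↥(H.P i k) ⧸ Submodule.comap (H.P i k).subtype (H.P i l)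

/-- The last index (the paper's `n_i`) in `Fin (H.n i)`. -/
def HaradaData.last (H : HaradaData R) (i : Fin H.m) : Fin (H.n i) :=
  ⟨H.n i - 1, Nat.sub_lt (H.hn i) one_pos⟩

/-- The right ideal `I = ⊕_{i,j} rad^{n_i - j + 1}(e_{ij}R)` of the paper. -/
def HaradaData.I (H : HaradaData R) : Submodule Rᵐᵒᵖ R :=
  ⨆ p : Σ i : Fin H.m, Fin (H.n i),
    radSub^[H.n p.1 - p.2.val] (rightIdeal R (H.e p.1 p.2))

/-- The submodule `T·I` of a right module `T`, for `I` a right ideal of `R`. -/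
def smulSub (I : Submodule Rᵐᵒᵖ R) (T : Type) [AddCommGroup T] [Module Rᵐᵒᵖ T] :
    Submodule Rᵐᵒᵖ T :=
  Submodule.span Rᵐᵒᵖ {x : T | ∃ (t : T) (r : R), r ∈ I ∧ x = op r • t}

/-!
Each `P_{ij}` is isomorphic to `e_{ij}R`, so the `P_{ij}` are projective, indecomposable and
pairwise non-isomorphic. An indecomposable injective module is uniform, and therefore a
monomorphism from a nonzero submodule of one indecomposable injective to another extends to an
isomorphism. For an injective `f : P_{ij} → P_{kl}` this isomorphism `e_{i1}R ≅ e_{k1}R` forces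
`i = k`, and, preserving iterated radicals, it carries `P_{ij}` onto `P_{kj}`; since the
chain of the `P_{kj}` is strictly decreasing, `l ≤ j`. Conversely, a surjection of `P_{ij}` onto
itself splits, and indecomposability makes its kernel vanish.
-/

section Complements

theorem exists_le_maximal_disjoint {α : Type*} [CompleteLattice α] [IsCompactlyGenerated α]
    {a b : α} (hab : Disjoint a b) : ∃ c, b ≤ c ∧ Maximal (Disjoint a) c :=
  zorn_le_nonempty₀ {c | Disjoint a c}
    (fun s hs hchain _ _ ↦
      ⟨sSup s, hchain.directedOn.disjoint_sSup_right.2 fun _ hc ↦ hs hc, fun _ ↦ le_sSup⟩) b hab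

variable {A E : Type*} [Ring A] [AddCommGroup E] [Module A E]

theorem isCompl_of_maximal_disjoint [Module.Injective A E] {N C : Submodule A E}
    (hC : Maximal (Disjoint N) C) (hN : Maximal (Disjoint C) N) : IsCompl N C := by
  have hmk : Function.Injective (C.mkQ ∘ₗ N.subtype) := by
    rw [← LinearMap.ker_eq_bot, LinearMap.ker_comp, Submodule.ker_mkQ,
      ← Submodule.disjoint_iff_comap_eq_bot]
    exact hC.prop
  -- The identity of `N` extends over `E ⧸ C`; the extension `q : E → E ⧸ C → E` is the projection.
  obtain ⟨g, hg⟩ := Module.Injective.out (C.mkQ ∘ₗ N.subtype) hmk N.subtype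
  let q : E →ₗ[A] E := g ∘ₗ C.mkQ
  have hqN (x : E) (hx : x ∈ N) : q x = x := hg ⟨x, hx⟩
  have hqC (x : E) (hx : x ∈ C) : q x = 0 := by
    simp [q, (Submodule.Quotient.mk_eq_zero C).2 hx]
  have hker : LinearMap.ker q = C := by
    refine (hC.eq_of_le (LinearMap.disjoint_ker.2 fun x hx hqx ↦ ?_) hqC).symm
    rw [← hqN x hx, hqx]
  have hcomap : C.comap q = C := by
    refine (hC.eq_of_le (Submodule.disjoint_def.2 fun x hx hqx ↦ ?_) fun x hx ↦ ?_).symm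
    · exact Submodule.disjoint_def.1 hC.prop x hx (hqN x hx ▸ hqx)
    · simp [hqC x hx]
  have hrange : LinearMap.range q = N := by
    refine (hN.eq_of_le (Submodule.disjoint_def.2 ?_) ?_).symm
    · rintro _ hqx ⟨x, rfl⟩
      exact hqC x (hcomap ▸ hqx)
    · exact fun x hx ↦ ⟨x, hqN x hx⟩
  have hproj : LinearMap.IsProj N q := ⟨fun x ↦ hrange ▸ LinearMap.mem_range_self q x, hqN⟩
  exact hker ▸ hproj.isCompl

theorem exists_isCompl_of_disjoint [Module.Injective A E] {N L : Submodule A E}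
    (hNL : Disjoint N L) : ∃ N' L', N ≤ N' ∧ L ≤ L' ∧ IsCompl N' L' := by
  obtain ⟨L', hL, hL'⟩ := exists_le_maximal_disjoint hNL
  obtain ⟨N', hN, hN'⟩ := exists_le_maximal_disjoint hL'.prop.symm
  have hL'' : Maximal (Disjoint N') L' :=
    ⟨hN'.prop.symm, fun D hD ↦ hL'.le_of_ge (hD.mono_left hN)⟩
  exact ⟨N', L', hN, hL, isCompl_of_maximal_disjoint hL'' hN'⟩

end Complements

namespace IsIndecomposableMod

variable {A E F : Type} [Ring A] [AddCommGroup E] [Module A E] [AddCommGroup F] [Module A F]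

theorem of_linearEquiv (hE : IsIndecomposableMod A E) (φ : E ≃ₗ[A] F) :
    IsIndecomposableMod A F := by
  have := hE.1
  refine ⟨φ.symm.toEquiv.nontrivial, fun N N' hNN' ↦ ?_⟩
  let ψ := Submodule.orderIsoMapComap φ.symm
  exact (hE.2 _ _ (ψ.isCompl hNN')).imp (map_eq_bot_iff ψ).1 (map_eq_bot_iff ψ).1

theorem eq_bot_or_eq_bot_of_disjoint [Module.Injective A E] (hE : IsIndecomposableMod A E)
    {N L : Submodule A E} (hNL : Disjoint N L) : N = ⊥ ∨ L = ⊥ := by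
  obtain ⟨N', L', hN, hL, hcompl⟩ := exists_isCompl_of_disjoint hNL
  exact (hE.2 N' L' hcompl).imp (eq_bot_mono hN) (eq_bot_mono hL)

theorem comp_eq_id_comm [Nontrivial E] (hF : IsIndecomposableMod A F) {g : E →ₗ[A] F}
    {r : F →ₗ[A] E} (hrg : r ∘ₗ g = LinearMap.id) : g ∘ₗ r = LinearMap.id := by
  have hrg_apply (x : E) : r (g x) = x := LinearMap.congr_fun hrg x
  have hidem : IsIdempotentElem (g ∘ₗ r) := LinearMap.ext fun y ↦ congrArg g (hrg_apply (r y))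
  rcases hF.2 _ _ (LinearMap.IsIdempotentElem.isCompl hidem) with hrange | hker
  · have hgr : g ∘ₗ r = 0 := LinearMap.range_eq_bot.1 hrange
    obtain ⟨x, hx⟩ := exists_ne (0 : E)
    refine absurd ?_ hx
    calc x = r ((g ∘ₗ r) (g x)) := by simp only [LinearMap.comp_apply, hrg_apply]
      _ = 0 := by simp [hgr]
  · refine LinearMap.ext fun y ↦ LinearMap.ker_eq_bot.1 hker ?_
    exact LinearMap.congr_fun hidem y

theorem bijective_of_injective [Module.Injective A E] [Nontrivial E]
    (hF : IsIndecomposableMod A F) {g : E →ₗ[A] F} (hg : Function.Injective g) :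
    Function.Bijective g := by
  obtain ⟨r, hr⟩ := Module.Injective.out g hg (LinearMap.id : E →ₗ[A] E)
  have hgr : g ∘ₗ r = LinearMap.id := hF.comp_eq_id_comm (LinearMap.ext hr)
  exact ⟨hg, fun y ↦ ⟨r y, LinearMap.congr_fun hgr y⟩⟩

theorem injective_of_surjective [Module.Projective A F] [Nontrivial F]
    (hE : IsIndecomposableMod A E) {f : E →ₗ[A] F} (hf : Function.Surjective f) :
    Function.Injective f := by
  obtain ⟨s, hs⟩ := Module.projective_lifting_property f LinearMap.id hf
  exact Function.LeftInverse.injective (LinearMap.congr_fun (hE.comp_eq_id_comm hs))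

theorem injective_of_range_linearEquiv [Module.Projective A E] (hE : IsIndecomposableMod A E)
    {f : E →ₗ[A] F} (φ : LinearMap.range f ≃ₗ[A] E) : Function.Injective f := by
  have := hE.1
  have hsurj : Function.Surjective (φ.toLinearMap ∘ₗ f.rangeRestrict) :=
    φ.surjective.comp f.surjective_rangeRestrict
  have hinj : Function.Injective f.rangeRestrict :=
    Function.Injective.of_comp (hE.injective_of_surjective hsurj)
  exact Subtype.val_injective.comp hinj

theorem exists_linearEquiv_extending [Module.Injective A E] [Module.Injective A F]
    (hE : IsIndecomposableMod A E) (hF : IsIndecomposableMod A F) {N : Type} [AddCommGroup N]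
    [Module A N] [Nontrivial N] {a : N →ₗ[A] E} {b : N →ₗ[A] F} (ha : Function.Injective a)
    (hb : Function.Injective b) : ∃ φ : E ≃ₗ[A] F, ∀ x, φ (a x) = b x := by
  have := hE.1
  obtain ⟨g, hg⟩ := Module.Injective.out a ha b
  have hdisj : Disjoint (LinearMap.range a) (LinearMap.ker g) := by
    rw [LinearMap.disjoint_ker]
    rintro _ ⟨x, rfl⟩ hx
    rw [hg, map_eq_zero_iff b hb] at hx
    rw [hx, map_zero]
  have hrange : LinearMap.range a ≠ ⊥ := by
    obtain ⟨x, hx⟩ := exists_ne (0 : N)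
    exact (Submodule.ne_bot_iff _).2 ⟨a x, ⟨x, rfl⟩, (map_ne_zero_iff a ha).2 hx⟩
  have hker : LinearMap.ker g = ⊥ := (hE.eq_bot_or_eq_bot_of_disjoint hdisj).resolve_left hrange
  exact ⟨LinearEquiv.ofBijective g (hF.bijective_of_injective (LinearMap.ker_eq_bot.1 hker)), hg⟩

end IsIndecomposableMod

section Radical

variable {A M M' : Type} [Ring A] [AddCommGroup M] [Module A M] [AddCommGroup M'] [Module A M']

theorem antitone_iterate_radSub (N : Submodule A M) : Antitone fun k ↦ radSub^[k] N :=
  fun _ _ hkl ↦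
    Function.antitone_iterate_of_le_id (fun N ↦ Submodule.map_subtype_le N _) hkl N

theorem iterate_radSub_le (N : Submodule A M) (k : ℕ) : radSub^[k] N ≤ N :=
  antitone_iterate_radSub N k.zero_le

theorem nonempty_radSub_linearEquiv {N : Submodule A M} {N' : Submodule A M'} (φ : N ≃ₗ[A] N') :
    Nonempty (radSub N ≃ₗ[A] radSub N') := by
  have hφ : (Module.jacobson A N).map φ.toLinearMap = Module.jacobson A N' :=
    Module.map_jacobson_of_bijective φ.bijective
  exact ⟨(Submodule.equivMapOfInjective _ N.subtype_injective _).symm ≪≫ₗ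
    φ.submoduleMap (Module.jacobson A N) ≪≫ₗ LinearEquiv.ofEq _ _ hφ ≪≫ₗ
    Submodule.equivMapOfInjective _ N'.subtype_injective _⟩

theorem map_radSub {g : M →ₗ[A] M'} (hg : Function.Injective g) (N : Submodule A M) :
    (radSub N).map g = radSub (N.map g) := by
  let φ := Submodule.equivMapOfInjective g hg N
  have hφ : (Module.jacobson A N).map φ.toLinearMap = Module.jacobson A (N.map g) :=
    Module.map_jacobson_of_bijective φ.bijective
  calc (radSub N).map g
      = (Module.jacobson A N).map (g ∘ₗ N.subtype) := (Submodule.map_comp _ _ _).symm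
    _ = ((Module.jacobson A N).map φ.toLinearMap).map (N.map g).subtype :=
        Submodule.map_comp φ.toLinearMap (N.map g).subtype _
    _ = radSub (N.map g) := by rw [hφ]; rfl

theorem map_iterate_radSub {g : M →ₗ[A] M'} (hg : Function.Injective g) (N : Submodule A M)
    (k : ℕ) : (radSub^[k] N).map g = radSub^[k] (N.map g) :=
  Function.Semiconj.iterate_right (map_radSub hg) k N

theorem range_comp_inclusion_iterate_radSub {N : Submodule A M} {g : N →ₗ[A] M'}
    (hg : Function.Injective g) (k : ℕ) :
    LinearMap.range (g ∘ₗ Submodule.inclusion (iterate_radSub_le N k)) =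
      radSub^[k] (LinearMap.range g) := by
  have htop : radSub^[k] N = (radSub^[k] (⊤ : Submodule A N)).map N.subtype := by
    rw [map_iterate_radSub N.subtype_injective, Submodule.map_subtype_top]
  rw [LinearMap.range_comp, Submodule.range_inclusion, htop,
    Submodule.comap_map_eq_of_injective N.subtype_injective, map_iterate_radSub hg,
    Submodule.map_top]

end Radical

theorem projective_rightIdeal {e : R} (he : IsIdempotentElem e) :
    Module.Projective Rᵐᵒᵖ (rightIdeal R e) := by
  let ι : rightIdeal R e →ₗ[Rᵐᵒᵖ] Rᵐᵒᵖ :=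
    { toFun := fun x ↦ op (x : R), map_add' := fun _ _ ↦ rfl, map_smul' := fun _ _ ↦ rfl }
  let s : Rᵐᵒᵖ →ₗ[Rᵐᵒᵖ] rightIdeal R e :=
    LinearMap.toSpanSingleton Rᵐᵒᵖ _ ⟨e, Submodule.mem_span_singleton_self e⟩
  refine Module.Projective.of_split ι s (LinearMap.ext fun ⟨x, hx⟩ ↦ Subtype.ext ?_)
  obtain ⟨r, rfl⟩ := Submodule.mem_span_singleton.1 hx
  change e * (e * r.unop) = e * r.unop
  rw [← mul_assoc, he.eq]

namespace HaradaData

variable (H : HaradaData R)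

theorem nonempty_P_linearEquiv (i : Fin H.m) (j : Fin (H.n i)) :
    Nonempty (H.P i j ≃ₗ[Rᵐᵒᵖ] rightIdeal R (H.e i j)) := by
  obtain ⟨j, hj⟩ := j
  induction j with
  | zero => exact ⟨LinearEquiv.refl _ _⟩
  | succ j ih =>
    obtain ⟨φ⟩ := ih (Nat.lt_of_succ_lt hj)
    obtain ⟨ψ⟩ := nonempty_radSub_linearEquiv φ
    obtain ⟨χ⟩ := H.rad_iso i ⟨j + 1, hj⟩ j.succ_pos
    have hsucc : H.P i ⟨j + 1, hj⟩ = radSub (H.P i ⟨j, Nat.lt_of_succ_lt hj⟩) :=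
      Function.iterate_succ_apply' _ _ _
    exact ⟨LinearEquiv.ofEq _ _ hsucc ≪≫ₗ ψ ≪≫ₗ χ.symm⟩

theorem isIndecomposableMod_P (i : Fin H.m) (j : Fin (H.n i)) :
    IsIndecomposableMod Rᵐᵒᵖ (H.P i j) :=
  let ⟨φ⟩ := H.nonempty_P_linearEquiv i j
  (H.indec i j).of_linearEquiv φ.symm

theorem projective_P (i : Fin H.m) (j : Fin (H.n i)) : Module.Projective Rᵐᵒᵖ (H.P i j) :=
  let ⟨φ⟩ := H.nonempty_P_linearEquiv i j
  have := projective_rightIdeal (H.idem i j)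
  Module.Projective.of_equiv φ.symm

theorem injective_P_zero (i : Fin H.m) : Module.Injective Rᵐᵒᵖ (H.P i ⟨0, H.hn i⟩) :=
  H.inj i

variable {i k : Fin H.m} {j : Fin (H.n i)} {l : Fin (H.n k)}

theorem sigma_eq_of_P_linearEquiv (φ : H.P i j ≃ₗ[Rᵐᵒᵖ] H.P k l) :
    (⟨i, j⟩ : Σ i : Fin H.m, Fin (H.n i)) = ⟨k, l⟩ := by
  by_contra hne
  obtain ⟨φij⟩ := H.nonempty_P_linearEquiv i j
  obtain ⟨φkl⟩ := H.nonempty_P_linearEquiv k l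
  exact (H.basic _ _ hne).false (φij.symm ≪≫ₗ φ ≪≫ₗ φkl)

theorem P_strictAnti (i : Fin H.m) : StrictAnti (H.P i) := by
  have hanti : Antitone (H.P i) := fun _ _ hjl ↦ antitone_iterate_radSub _ hjl
  refine hanti.strictAnti_of_injective fun j l hjl ↦ ?_
  exact eq_of_heq (Sigma.mk.inj (H.sigma_eq_of_P_linearEquiv (LinearEquiv.ofEq _ _ hjl))).2

theorem P_le_P_zero (i : Fin H.m) (j : Fin (H.n i)) :
    H.P i j ≤ H.P i ⟨0, H.hn i⟩ :=
  iterate_radSub_le _ j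

variable {f : H.P i j →ₗ[Rᵐᵒᵖ] H.P k l}

theorem exists_linearEquiv_extending (hf : Function.Injective f) :
    ∃ φ : H.P i ⟨0, H.hn i⟩ ≃ₗ[Rᵐᵒᵖ] H.P k ⟨0, H.hn k⟩,
      ∀ x, (φ (Submodule.inclusion (H.P_le_P_zero i j) x) : R) = f x := by
  have := (H.isIndecomposableMod_P i j).1
  have := H.injective_P_zero i
  have := H.injective_P_zero k
  obtain ⟨φ, hφ⟩ := (H.isIndecomposableMod_P i ⟨0, H.hn i⟩).exists_linearEquiv_extending
    (H.isIndecomposableMod_P k ⟨0, H.hn k⟩) (Submodule.inclusion_injective (H.P_le_P_zero i j))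
    (b := Submodule.inclusion (H.P_le_P_zero k l) ∘ₗ f)
    ((Submodule.inclusion_injective (H.P_le_P_zero k l)).comp hf)
  exact ⟨φ, fun x ↦ congrArg Subtype.val (hφ x)⟩

theorem eq_of_injective (hf : Function.Injective f) : i = k :=
  let ⟨φ, _⟩ := H.exists_linearEquiv_extending hf
  congrArg Sigma.fst (H.sigma_eq_of_P_linearEquiv φ)

theorem map_range_eq_of_injective (hf : Function.Injective f) :
    (LinearMap.range f).map (H.P k l).subtype = radSub^[j] (H.P k ⟨0, H.hn k⟩) := by
  obtain ⟨φ, hφ⟩ := H.exists_linearEquiv_extending hf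
  let g : H.P i ⟨0, H.hn i⟩ →ₗ[Rᵐᵒᵖ] R := (H.P k ⟨0, H.hn k⟩).subtype ∘ₗ φ.toLinearMap
  have hg : Function.Injective g := Subtype.val_injective.comp φ.injective
  have hgf : (H.P k l).subtype ∘ₗ f = g ∘ₗ Submodule.inclusion (H.P_le_P_zero i j) :=
    LinearMap.ext fun x ↦ (hφ x).symm
  have hrange : LinearMap.range g = H.P k ⟨0, H.hn k⟩ := by
    rw [LinearMap.range_comp_of_range_eq_top _ φ.range, Submodule.range_subtype]
  rw [← LinearMap.range_comp, hgf, ← hrange]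
  exact range_comp_inclusion_iterate_radSub hg j

theorem injective_of_map_range_eq
    (hf : (LinearMap.range f).map (H.P k l).subtype = H.P i j) : Function.Injective f := by
  have := H.projective_P i j
  have φ : LinearMap.range f ≃ₗ[Rᵐᵒᵖ] H.P i j :=
    Submodule.equivMapOfInjective _ (H.P k l).subtype_injective _ ≪≫ₗ LinearEquiv.ofEq _ _ hf
  exact (H.isIndecomposableMod_P i j).injective_of_range_linearEquiv φ

end HaradaData

theorem statement3_general (H : HaradaData R) (i k : Fin H.m)
    (j : Fin (H.n i)) (l : Fin (H.n k))
    (f : ↥(H.P i j) →ₗ[Rᵐᵒᵖ] ↥(H.P k l)) :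
    Function.Injective f ↔
      ∃ h : i = k, l.val ≤ j.val ∧
        Submodule.map (H.P k l).subtype (LinearMap.range f)
          = H.P k ⟨j.val, by subst h; exact j.isLt⟩ := by
  constructor
  · intro hf
    obtain rfl : i = k := H.eq_of_injective hf
    have hrange : Submodule.map (H.P i l).subtype (LinearMap.range f) = H.P i j :=
      H.map_range_eq_of_injective hf
    have hle : H.P i j ≤ H.P i l := hrange ▸ Submodule.map_subtype_le _ _
    exact ⟨rfl, (H.P_strictAnti i).le_iff_ge.1 hle, hrange⟩
  · rintro ⟨rfl, -, hrange⟩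
    exact H.injective_of_map_range_eq hrange

/-- Lemma 2.2(1).  A homomorphism `f : P_{ij} → P_{kl}` is injective iff
`i = k`, `j ≥ l` and the image of `f` equals `P_{kj}` (as submodules of `e_{k1}R`). -/
theorem statement3 (K R : Type) [Field K] [IsAlgClosed K] [Ring R] [Algebra K R]
    [FiniteDimensional K R] (H : HaradaData R) (i k : Fin H.m)
    (j : Fin (H.n i)) (l : Fin (H.n k))
    (f : ↥(H.P i j) →ₗ[Rᵐᵒᵖ] ↥(H.P k l)) :
    Function.Injective f ↔
      ∃ h : i = k, l.val ≤ j.val ∧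
        Submodule.map (H.P k l).subtype (LinearMap.range f)
          = H.P k ⟨j.val, by subst h; exact j.isLt⟩ :=
  statement3_general H i k j l f
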